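/- arXiv:1905.03388 — 5 statements merged into one kernel-verified Lean document; each statement's English description precedes it below -/
import Mathlib

section
/- For all positive integers a, b and every nonnegative integer k, one has ⌈ak/b⌉ = Σ_{i=1}^{a} ⌊(k + ⌈ib/a⌉ − 1)/b⌋. -/
/-!
By the nested-ceiling rule `⌊(⌈y⌉ - 1) / b⌋ = ⌈y / b⌉ - 1`, the `i`-th summand is
`⌈k / b + i / a⌉ - 1`, so the identity is the ceiling form of Hermite's identity at `x = k / b`.
For Hermite's identity, the same rule turns `⌈x + i / n⌉ - 1` into `⌊(m + i - 1) / n⌋`, where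
`m = ⌈n * x⌉`; raising `m` by one drops one term `⌊m / n⌋` from the sum and gains `⌊m / n⌋ + 1`, so
the sum equals `m`.
-/

theorem sum_range_add_div {n : ℕ} (hn : 0 < n) (m : ℕ) :
    ∑ i ∈ Finset.range n, (m + i) / n = m := by
  induction m with
  | zero =>
    refine Finset.sum_eq_zero fun i hi => ?_
    rw [zero_add, Nat.div_eq_of_lt (Finset.mem_range.1 hi)]
  | succ m ih =>
    have shift : ∑ i ∈ Finset.range n, (m + (i + 1)) / n + m / n =
        ∑ i ∈ Finset.range n, (m + i) / n + (m + n) / n := by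
      rw [← Finset.sum_range_succ, Finset.sum_range_succ', add_zero]
    rw [ih, Nat.add_div_right m hn] at shift
    simp only [add_assoc, add_comm 1]
    omega

section Ceil

variable {K : Type*} [Semifield K] [LinearOrder K] [IsStrictOrderedRing K] [FloorSemiring K]

theorem natCeil_sub_one_div (x : K) (b : ℕ) : (⌈x⌉₊ - 1) / b = ⌈x / b⌉₊ - 1 := by
  rcases b.eq_zero_or_pos with rfl | hb
  · simp
  refine eq_of_forall_lt_iff fun n => ?_
  have hbK : (0 : K) < b := by exact_mod_cast hb
  calc n < (⌈x⌉₊ - 1) / b ↔ (n + 1) * b < ⌈x⌉₊ := by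
        rw [← Nat.add_one_le_iff, Nat.le_div_iff_mul_le hb]
        have : 0 < (n + 1) * b := by positivity
        omega
    _ ↔ n + 1 < ⌈x / b⌉₊ := by
        rw [Nat.lt_ceil, Nat.lt_ceil, lt_div_iff₀ hbK, Nat.cast_mul]
    _ ↔ n < ⌈x / b⌉₊ - 1 := Nat.lt_sub_iff_add_lt.symm

theorem sum_natCeil_add_div_sub_one {n : ℕ} (hn : 0 < n) {x : K} (hx : 0 ≤ x) :
    ∑ i ∈ Finset.Icc 1 n, (⌈x + i / n⌉₊ - 1) = ⌈n * x⌉₊ := by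
  have hnK : (n : K) ≠ 0 := by exact_mod_cast hn.ne'
  have term_eq (i : ℕ) : ⌈x + i / n⌉₊ - 1 = (⌈n * x⌉₊ + i - 1) / n := by
    rw [← Nat.ceil_add_natCast (by positivity), natCeil_sub_one_div, add_div,
      mul_div_cancel_left₀ x hnK]
  calc ∑ i ∈ Finset.Icc 1 n, (⌈x + i / n⌉₊ - 1)
      = ∑ i ∈ Finset.Ico 1 (n + 1), (⌈n * x⌉₊ + i - 1) / n := by
        simp only [term_eq, Finset.Ico_add_one_right_eq_Icc]
    _ = ∑ j ∈ Finset.range n, (⌈n * x⌉₊ + j) / n := by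
        simp only [Finset.sum_Ico_eq_sum_range, Nat.add_sub_cancel, add_comm 1, ← add_assoc]
    _ = ⌈n * x⌉₊ := sum_range_add_div hn _

end Ceil

theorem ceil_mul_div_eq_sum_floor (a b : ℕ) (ha : 0 < a) (hb : 0 < b) (k : ℕ) :
    ⌈(a * k : ℚ) / (b : ℚ)⌉₊ =
      ∑ i ∈ Finset.Icc 1 a, (k + ⌈(i * b : ℚ) / (a : ℚ)⌉₊ - 1) / b := by
  have term_eq (i : ℕ) :
      (k + ⌈(i * b : ℚ) / a⌉₊ - 1) / b = ⌈(k / b : ℚ) + i / a⌉₊ - 1 := by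
    rw [add_comm k, ← Nat.ceil_add_natCast (by positivity), natCeil_sub_one_div]
    congr 2
    field_simp
    ring
  simp only [term_eq]
  rw [sum_natCeil_add_div_sub_one ha (by positivity), mul_div_assoc]
end

section
/- Let a and b be positive integers, and let s_0 ≤ s_1 ≤ ⋯ ≤ s_{a−1} be integers with 0 ≤ s_0 and s_{a−1} < b. If ⌈ak/b⌉ = Σ_{i=0}^{a−1} ⌊(k+s_i)/b⌋ holds for every nonnegative integer k, then s_i = ⌈(i+1)b/a⌉ − 1 for every i = 0, 1, …, a−1. -/
/-!
For `k ≤ b` every summand `⌊(k + s_i) / b⌋` is `0` or `1`, so the sum counts the indices with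
`b - k ≤ s_i`. As `s` is monotone these indices form a final segment of `{0, …, a - 1}`, and hence
`m ≤ s_i` holds exactly when the sum at `k = b - m` is at least `a - i`. Since the sum equals
`⌈a (b - m) / b⌉`, this means `a m < (i + 1) b`, so `s_i` is the largest integer below
`(i + 1) b / a`.
-/

open Finset

theorem nat_add_div_eq_ite {b k t : ℕ} (hk : k ≤ b) (ht : t < b) :
    (k + t) / b = if b ≤ k + t then 1 else 0 := by
  split_ifs with h
  · exact Nat.div_eq_of_lt_le (by lia) (by lia)
  · exact Nat.div_eq_of_lt (not_le.1 h)

theorem sum_add_div_eq_card_filter {ι : Type*} {I : Finset ι} {s : ι → ℕ} {b k : ℕ}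
    (hk : k ≤ b) (hs : ∀ i ∈ I, s i < b) :
    ∑ i ∈ I, (k + s i) / b = #{i ∈ I | b ≤ k + s i} := by
  rw [card_filter]
  exact sum_congr rfl fun i hi ↦ nat_add_div_eq_ite hk (hs i hi)

theorem le_card_filter_range_add_iff {a i : ℕ} {p : ℕ → Prop} [DecidablePred p]
    (hp : ∀ i j, i ≤ j → j < a → p i → p j) (hi : i < a) :
    a ≤ #{j ∈ range a | p j} + i ↔ p i := by
  constructor
  · intro hcard
    by_contra hpi
    have hsub : {j ∈ range a | p j} ⊆ Ico (i + 1) a := fun j hj ↦ by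
      obtain ⟨hja, hpj⟩ := mem_filter.1 hj
      have hij : i < j := not_le.1 fun hji ↦ hpi (hp j i hji hi hpj)
      exact mem_Ico.2 ⟨hij, mem_range.1 hja⟩
    have hle := card_le_card hsub
    rw [Nat.card_Ico] at hle
    lia
  · intro hpi
    have hsub : Ico i a ⊆ {j ∈ range a | p j} := fun j hj ↦ by
      obtain ⟨hij, hja⟩ := mem_Ico.1 hj
      exact mem_filter.2 ⟨mem_range.2 hja, hp i j hij hja hpi⟩
    have hle := card_le_card hsub
    rw [Nat.card_Ico] at hle
    lia

theorem le_sum_add_div_add_iff {a b k i : ℕ} {s : ℕ → ℕ}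
    (hmono : ∀ i j, i ≤ j → j < a → s i ≤ s j) (hs : ∀ j < a, s j < b) (hk : k ≤ b) (hi : i < a) :
    a ≤ ∑ j ∈ range a, (k + s j) / b + i ↔ b ≤ k + s i := by
  rw [sum_add_div_eq_card_filter hk fun j hj ↦ hs j (mem_range.1 hj)]
  refine le_card_filter_range_add_iff (fun j l hjl hl hj ↦ ?_) hi
  exact hj.trans (Nat.add_le_add_left (hmono j l hjl hl) k)

theorem le_ceil_add_iff {R : Type*} [Ring R] [LinearOrder R] [IsStrictOrderedRing R]
    [FloorSemiring R] {x : R} (hx : 0 ≤ x) (m n : ℕ) :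
    m ≤ ⌈x⌉₊ + n ↔ (m : R) < x + (n + 1) := by
  rw [← Nat.lt_add_one_iff, add_assoc, ← Nat.ceil_add_natCast hx, Nat.lt_ceil, Nat.cast_add_one]

theorem le_ceil_mul_div_add_iff {K : Type*} [Field K] [LinearOrder K] [IsStrictOrderedRing K]
    [FloorSemiring K] {b : ℕ} (hb : 0 < b) (a k i : ℕ) :
    a ≤ ⌈(a * k : K) / b⌉₊ + i ↔ a * b < a * k + (i + 1) * b := by
  have hbK : (0 : K) < b := Nat.cast_pos.2 hb
  rw [le_ceil_add_iff (by positivity), div_add' _ _ _ hbK.ne', lt_div_iff₀ hbK]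
  norm_cast

theorem le_iff_mul_lt_of_ceil_eq_sum {a b m i : ℕ} {s : ℕ → ℕ}
    (hmono : ∀ i j, i ≤ j → j < a → s i ≤ s j) (hs : ∀ j < a, s j < b) (hm : m ≤ b) (hi : i < a)
    (hsum : ⌈(a * (b - m : ℕ) : ℚ) / b⌉₊ = ∑ j ∈ range a, (b - m + s j) / b) :
    m ≤ s i ↔ a * m < (i + 1) * b := by
  have hb : 0 < b := (Nat.zero_le _).trans_lt (hs i hi)
  have hab : a * (b - m) + a * m = a * b := by rw [← mul_add, Nat.sub_add_cancel hm]
  calc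
    m ≤ s i ↔ b ≤ b - m + s i := by lia
    _ ↔ a ≤ ∑ j ∈ range a, (b - m + s j) / b + i :=
      (le_sum_add_div_add_iff hmono hs (Nat.sub_le b m) hi).symm
    _ ↔ a * b < a * (b - m) + (i + 1) * b := by rw [← hsum, le_ceil_mul_div_add_iff hb]
    _ ↔ a * m < (i + 1) * b := by rw [← hab, Nat.add_lt_add_iff_left]

theorem eq_ceil_div_sub_one {K : Type*} [Field K] [LinearOrder K] [IsStrictOrderedRing K]
    [FloorSemiring K] {a c t : ℕ} (h : ∀ m, m ≤ t ↔ a * m < c) :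
    t = ⌈(c : K) / a⌉₊ - 1 := by
  have hc : 0 < c := (Nat.zero_le _).trans_lt ((h 0).1 t.zero_le)
  have hct : c ≤ a * (t + 1) := not_lt.1 fun hlt ↦ t.not_succ_le_self ((h (t + 1)).2 hlt)
  have haK : (0 : K) < a := Nat.cast_pos.2 (Nat.pos_of_mul_pos_right (hc.trans_le hct))
  have hcK : (0 : K) < c := Nat.cast_pos.2 hc
  refine eq_of_forall_le_iff fun m ↦ ?_
  rw [h, Nat.le_sub_one_iff_lt (Nat.ceil_pos.2 (div_pos hcK haK)), Nat.lt_ceil, lt_div_iff₀ haK,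
    mul_comm a]
  norm_cast

theorem ceil_decomposition_unique (a b : ℕ) (ha : 0 < a) (hb : 0 < b) (s : ℕ → ℕ)
    (hmono : ∀ i j, i ≤ j → j < a → s i ≤ s j) (hub : s (a - 1) < b)
    (hsum : ∀ k : ℕ, ⌈(a * k : ℚ) / (b : ℚ)⌉₊ = ∑ i ∈ Finset.range a, (k + s i) / b) :
    ∀ i < a, s i = ⌈((i + 1) * b : ℚ) / (a : ℚ)⌉₊ - 1 := by
  intro i hi
  have hs : ∀ j < a, s j < b := fun j hj ↦
    (hmono j (a - 1) (Nat.le_sub_one_of_lt hj) (Nat.sub_one_lt_of_lt ha)).trans_lt hub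
  have hthreshold (m : ℕ) : m ≤ s i ↔ a * m < (i + 1) * b := by
    rcases le_or_gt m b with hm | hm
    · exact le_iff_mul_lt_of_ceil_eq_sum hmono hs hm hi (hsum (b - m))
    · have hmul : (i + 1) * b ≤ a * m := Nat.mul_le_mul hi hm.le
      exact iff_of_false ((hs i hi).trans hm).not_ge hmul.not_gt
  exact_mod_cast eq_ceil_div_sub_one (K := ℚ) hthreshold
end

section
/- Let a < b be positive integers with r = b mod a > 0 and q = ⌊b/a⌋, and for i = 0, 1, …, a−1 let S_i = {⌈bi/a⌉, ⌈bi/a⌉+1, …, ⌈b(i+1)/a⌉−1}. Then for each i ∈ {0,…,a−1}, |S_i| = q+1 if and only if there exists an integer j with 0 ≤ j ≤ r−1 and i = ⌊aj/r⌋. -/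
/-!
Writing `b = qa + r`, the endpoints satisfy `⌈bi/a⌉ = qi + ⌈ri/a⌉`, so `|Sᵢ|` exceeds `q` by the
size of the corresponding interval for the pair `(a, r)`. The interval of index `i` for `(a, r)`
has at most one element because `r ≤ a`, and it is the fibre over `i` of the map `j ↦ ⌊aj/r⌋`.
Hence the excess is `0` or `1`, and it equals `1` exactly when `i` is a value of that map.
-/

theorem ceil_natCast_div_natCast_eq_ceilDiv {K : Type*} [Field K] [LinearOrder K]
    [IsStrictOrderedRing K] [FloorSemiring K] (m n : ℕ) :
    ⌈(m : K) / (n : K)⌉₊ = m ⌈/⌉ n := by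
  obtain rfl | hn := n.eq_zero_or_pos
  · simp
  · refine eq_of_forall_ge_iff fun c ↦ ?_
    have hn' : (0 : K) < n := Nat.cast_pos.2 hn
    rw [Nat.ceil_le, div_le_iff₀' hn', ceilDiv_le_iff_le_mul hn]
    exact_mod_cast Iff.rfl

theorem mul_add_ceilDiv {a : ℕ} (ha : 0 < a) (k m : ℕ) : (a * k + m) ⌈/⌉ a = k + m ⌈/⌉ a := by
  rw [Nat.ceilDiv_eq_add_pred_div, Nat.ceilDiv_eq_add_pred_div, ← Nat.mul_add_div ha]
  congr 1
  omega

/-- The set `Sᵢ` for the pair `(a, b)`, namely the integers `m` with `⌈bi/a⌉ ≤ m < ⌈b(i+1)/a⌉`.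
The numbers `a` and `b` are arbitrary, so that `b` can be replaced by its remainder modulo `a`. -/
def subinterval (a b i : ℕ) : Finset ℕ :=
  Finset.Ico (b * i ⌈/⌉ a) (b * (i + 1) ⌈/⌉ a)

theorem mem_subinterval_iff {a b i m : ℕ} (ha : 0 < a) (hb : 0 < b) :
    m ∈ subinterval a b i ↔ a * m / b = i := by
  rw [subinterval, Finset.mem_Ico, ceilDiv_le_iff_le_mul ha,
    lt_iff_lt_of_le_iff_le (ceilDiv_le_iff_le_mul ha), mul_comm b i, mul_comm b (i + 1),
    ← Nat.le_div_iff_mul_le hb, ← Nat.div_lt_iff_lt_mul hb, Nat.lt_add_one_iff,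
    ← Nat.eq_iff_le_and_ge, eq_comm]

theorem card_subinterval_eq_div_add {a : ℕ} (ha : 0 < a) (b i : ℕ) :
    (subinterval a b i).card = b / a + (subinterval a (b % a) i).card := by
  have ceilDiv_split (k : ℕ) : b * k ⌈/⌉ a = b / a * k + b % a * k ⌈/⌉ a := by
    rw [← mul_add_ceilDiv ha, ← mul_assoc, ← add_mul, Nat.div_add_mod]
  have endpoint_le : b % a * i ⌈/⌉ a ≤ b % a * (i + 1) ⌈/⌉ a :=
    (gc_mul_ceilDiv ha).monotone_l (Nat.mul_le_mul_left _ i.le_succ)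
  rw [subinterval, subinterval, Nat.card_Ico, Nat.card_Ico, ceilDiv_split i, ceilDiv_split (i + 1),
    mul_add_one (b / a), add_assoc, Nat.add_sub_add_left, Nat.add_sub_assoc endpoint_le]

theorem card_subinterval_le_one {a b : ℕ} (ha : 0 < a) (hba : b ≤ a) (i : ℕ) :
    (subinterval a b i).card ≤ 1 := by
  rw [subinterval, Nat.card_Ico, Nat.sub_le_iff_le_add', ceilDiv_le_iff_le_mul ha]
  calc b * (i + 1) = b * i + b := mul_add_one b i
    _ ≤ a * (b * i ⌈/⌉ a) + a := add_le_add (le_smul_ceilDiv ha) hba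
    _ = a * (b * i ⌈/⌉ a + 1) := (mul_add_one a _).symm

theorem card_subinterval_eq_div_add_one_iff {a : ℕ} (ha : 0 < a) (b i : ℕ) :
    (subinterval a b i).card = b / a + 1 ↔ (subinterval a (b % a) i).Nonempty := by
  have card_le_one := card_subinterval_le_one ha (b.mod_lt ha).le i
  rw [card_subinterval_eq_div_add ha, Nat.add_left_cancel_iff, ← Finset.card_pos]
  omega

theorem card_subinterval_eq_q_add_one_iff_general (a b : ℕ) (hr : 0 < b % a)
    (S : ℕ → Finset ℕ)
    (hS : ∀ i, S i = Finset.Ico ⌈(b * i : ℚ) / (a : ℚ)⌉₊ ⌈(b * (i + 1) : ℚ) / (a : ℚ)⌉₊) :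
    ∀ i < a, ((S i).card = b / a + 1 ↔ ∃ j, j ≤ b % a - 1 ∧ i = a * j / (b % a)) := by
  intro i hi
  have ha : 0 < a := i.zero_le.trans_lt hi
  have S_eq : S i = subinterval a b i := by
    rw [hS, subinterval, ← ceil_natCast_div_natCast_eq_ceilDiv (K := ℚ),
      ← ceil_natCast_div_natCast_eq_ceilDiv (K := ℚ)]
    push_cast
    rfl
  have index_le {j : ℕ} (hj : i = a * j / (b % a)) : j ≤ b % a - 1 := by
    rw [hj, Nat.div_lt_iff_lt_mul hr] at hi
    exact Nat.le_sub_one_of_lt (Nat.lt_of_mul_lt_mul_left hi)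
  rw [S_eq, card_subinterval_eq_div_add_one_iff ha]
  refine exists_congr fun j ↦ ?_
  rw [mem_subinterval_iff ha hr, eq_comm, iff_and_self]
  exact index_le

theorem card_subinterval_eq_q_add_one_iff (a b : ℕ) (ha : 0 < a) (hab : a < b)
    (hr : 0 < b % a)
    (S : ℕ → Finset ℕ)
    (hS : ∀ i, S i = Finset.Ico ⌈(b * i : ℚ) / (a : ℚ)⌉₊ ⌈(b * (i + 1) : ℚ) / (a : ℚ)⌉₊) :
    ∀ i < a, ((S i).card = b / a + 1 ↔ ∃ j, j ≤ b % a - 1 ∧ i = a * j / (b % a)) :=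
  card_subinterval_eq_q_add_one_iff_general a b hr S hS
end

section
/- Let r < a be positive integers with r not dividing a, and let R be a permutation of [r] = {0,…,r−1} that is nice corresponding to a. Let R̄ be the complement of R, defined by R̄(i) = r−1−R(i). Then for every integer b > a with b ≡ r (mod a), the extension sequence of (R̄, a) is a permutation of [a] that is nice corresponding to b. -/
/-- `A` is a permutation of `[a] = {0, 1, …, a-1}`, viewed as a function `ℕ → ℕ`
restricted to `{i | i < a}`. -/
def IsPermOf (a : ℕ) (A : ℕ → ℕ) : Prop :=
  Set.BijOn A {i | i < a} {i | i < a}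

/-- The complement of a permutation `A` of `[a]`: `Ā(i) = a - 1 - A(i)`. -/
def permCompl (a : ℕ) (A : ℕ → ℕ) : ℕ → ℕ := fun i => a - 1 - A i

/-- A permutation `A` of `[a]` is *nice* corresponding to `b > a` with `a ∤ b`,
where `r = b % a` and `d = gcd(a, b)`, if `A(i) < A(i + r)` for all
`0 ≤ i ≤ a - r - 1` and `A(j) < A(j - a + r)` for all `a - r ≤ j ≤ a - d - 1`. -/
def Nice (a b : ℕ) (A : ℕ → ℕ) : Prop :=
  (∀ i, i + b % a < a → A i < A (i + b % a)) ∧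
  (∀ j, a - b % a ≤ j → j + Nat.gcd a b < a → A j < A (j + b % a - a))

/-- `B` is the extension sequence of the pair `(A, b)`, where `A` is a permutation
of `[a]`: `B` is the permutation of `[b]` with `B(i) < B(j)` iff
`A(i mod a) < A(j mod a)`, or `A(i mod a) = A(j mod a)` and `i < j`. -/
def IsExtSeq (a b : ℕ) (A B : ℕ → ℕ) : Prop :=
  IsPermOf b B ∧
  ∀ i < b, ∀ j < b,
    (B i < B j ↔ A (i % a) < A (j % a) ∨ (A (i % a) = A (j % a) ∧ i < j))

/-!
The two clauses of niceness say together that `R` increases along the translation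
`k ↦ (k + a) % r`, away from the last `gcd r a` indices, so its complement decreases there.
In `B`, replacing an index `i` by `i + r < a` keeps its residue modulo `r`, and ties are broken by
position. If instead the translation by `r` wraps around from `j` to `k = j + r - a`, then
`j ≡ k + a` modulo `r`, and the decrease of the complement from `k` to `(k + a) % r` gives
`B j < B k`.
-/

lemma permCompl_lt_permCompl {a i j : ℕ} {A : ℕ → ℕ} (hj : A j < a) (hij : A i < A j) :
    permCompl a A j < permCompl a A i := by
  unfold permCompl
  omega

lemma Nice.lt_apply_add_mod {a b k : ℕ} {A : ℕ → ℕ} (hA : Nice a b A)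
    (hk : k + Nat.gcd a b < a) : A k < A ((k + b) % a) := by
  have hka : k % a = k := Nat.mod_eq_of_lt (by omega)
  rcases lt_or_ge (k + b % a) a with hlt | hge
  · rw [Nat.add_mod_of_add_mod_lt (by rwa [hka]), hka]
    exact hA.1 k hlt
  · have hwrap : (k + b) % a + a = k + b % a := by
      rw [Nat.add_mod_add_of_le_add_mod (by rwa [hka]), hka]
    rw [Nat.eq_sub_of_add_eq hwrap]
    exact hA.2 k (Nat.sub_le_of_le_add hge) hk

lemma IsExtSeq.lt_of_mod_eq {a b i j : ℕ} {A B : ℕ → ℕ} (hB : IsExtSeq a b A B)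
    (hij : i < j) (hj : j < b) (hmod : i % a = j % a) : B i < B j :=
  (hB.2 i (hij.trans hj) j hj).2 (.inr ⟨congrArg A hmod, hij⟩)

lemma IsExtSeq.lt_of_apply_mod_lt {a b i j : ℕ} {A B : ℕ → ℕ} (hB : IsExtSeq a b A B)
    (hi : i < b) (hj : j < b) (hlt : A (i % a) < A (j % a)) : B i < B j :=
  (hB.2 i hi j hj).2 (.inl hlt)

theorem extSeq_of_nice_is_nice_general {r a b : ℕ} {S B : ℕ → ℕ} (hr : 0 < r)
    (hS : ∀ k, k + Nat.gcd r a < r → S ((k + a) % r) < S k)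
    (hmod : b % a = r) (hB : IsExtSeq r a S B) :
    IsPermOf a B ∧ Nice a b B := by
  refine ⟨hB.1, fun i hi => ?_, fun j hj hjd => ?_⟩
  · rw [hmod] at hi ⊢
    exact hB.lt_of_mod_eq (Nat.lt_add_of_pos_right hr) hi (Nat.add_mod_right i r).symm
  · have hra : r < a := hmod ▸ Nat.mod_lt b (by omega)
    rw [Nat.gcd_rec, hmod] at hjd
    rw [hmod] at hj ⊢
    obtain ⟨k, hk⟩ : ∃ k, j + r = k + a :=
      Nat.exists_eq_add_of_le' (Nat.sub_le_iff_le_add.1 hj)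
    have hjmod : j % r = (k + a) % r := by rw [← hk, Nat.add_mod_right]
    have hkmod : k % r = k := Nat.mod_eq_of_lt (by omega)
    rw [hk, Nat.add_sub_cancel]
    apply hB.lt_of_apply_mod_lt (by omega) (by omega)
    rw [hjmod, hkmod]
    exact hS k (by omega)

theorem extSeq_of_nice_is_nice (r a : ℕ) (hr : 0 < r) (hra : r < a) (hnd : ¬ r ∣ a)
    (R : ℕ → ℕ) (hR : IsPermOf r R) (hnice : Nice r a R)
    (b : ℕ) (hab : a < b) (hmod : b % a = r)
    (B : ℕ → ℕ) (hB : IsExtSeq r a (permCompl r R) B) :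
    IsPermOf a B ∧ Nice a b B :=
  extSeq_of_nice_is_nice_general hr (fun _ hk =>
    permCompl_lt_permCompl (hR.mapsTo (Nat.mod_lt _ hr)) (hnice.lt_apply_add_mod hk)) hmod hB
end

section
/- Let a < b be positive integers with r = b mod a > 0, let R be a permutation of [r] with complement R̄, let A be the extension sequence of (R, a), and let A' be the extension sequence of (R̄, a). Then {A'(i) : 0 ≤ i ≤ r−1} = {a−1−A(i) : a−r ≤ i ≤ a−1}; that is, the set of the first r entries of A' equals the set obtained by subtracting each of the last r entries of A from a−1. -/
/-!
The value `A x` of a permutation of `[a]` is the number of `j < a` with `A j < A x`, and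
`a - 1 - A x` is the number of those with `A x < A j`. In an extension sequence, ties between
positions in the same residue class modulo `r` are broken in favour of the earlier one; no position
of the class of `i < r` precedes `i`, and none follows a `k` among the last `r` positions. Such
entries are therefore compared with all the others in their respective directions by residues
alone. Complementing `R` exchanges the two directions, so that `A' (k % r) = a - 1 - A k` for each
of the last `r` positions `k`, and these positions run once through the residues modulo `r`.
-/

namespace IsPermOf

variable {a : ℕ} {A : ℕ → ℕ}

theorem card_filter_comp (hA : IsPermOf a A) (p : ℕ → Prop) [DecidablePred p] :
    ((Finset.range a).filter fun j => p (A j)).card = ((Finset.range a).filter p).card := by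
  have image_range : (Finset.range a).image A = Finset.range a := by
    apply Finset.coe_injective
    simpa [Set.Iio] using hA.image_eq
  have injOn : Set.InjOn A ((Finset.range a).filter fun j => p (A j)) :=
    hA.injOn.mono fun j hj => Finset.mem_range.mp (Finset.mem_filter.mp hj).1
  rw [← Finset.card_image_of_injOn injOn, ← Finset.filter_image, image_range]

theorem card_filter_lt_apply (hA : IsPermOf a A) {x : ℕ} (hx : x < a) :
    ((Finset.range a).filter fun j => A j < A x).card = A x := by
  have hAx : A x < a := hA.mapsTo hx
  have filter_eq : (Finset.range a).filter (· < A x) = Finset.range (A x) := by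
    ext y
    simp only [Finset.mem_filter, Finset.mem_range]
    omega
  rw [hA.card_filter_comp (· < A x), filter_eq, Finset.card_range]

theorem card_filter_apply_lt (hA : IsPermOf a A) (x : ℕ) :
    ((Finset.range a).filter fun j => A x < A j).card = a - 1 - A x := by
  have filter_eq : (Finset.range a).filter (A x < ·) = Finset.Ico (A x + 1) a := by
    ext y
    simp only [Finset.mem_filter, Finset.mem_range, Finset.mem_Ico]
    omega
  rw [hA.card_filter_comp (A x < ·), filter_eq, Nat.card_Ico]
  omega

end IsPermOf

theorem permCompl_lt_permCompl_iff {m i j : ℕ} {R : ℕ → ℕ} (hi : R i < m) (hj : R j < m) :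
    permCompl m R i < permCompl m R j ↔ R j < R i := by
  unfold permCompl
  omega

namespace IsExtSeq

variable {r a i j k : ℕ} {R S A A' : ℕ → ℕ}

theorem lt_apply_iff_of_lt (hA : IsExtSeq r a R A) (hR : Set.InjOn R (Set.Iio r)) (hra : r ≤ a)
    (hi : i < r) (hj : j < a) : A j < A i ↔ R (j % r) < R i := by
  rw [hA.2 j hj i (hi.trans_le hra), Nat.mod_eq_of_lt hi, or_iff_left]
  rintro ⟨hRji, hji⟩
  have residue_eq : j % r = i := hR (Nat.mod_lt j (by omega)) hi hRji
  exact (Nat.mod_le j r).not_gt (residue_eq ▸ hji)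

theorem apply_lt_iff_of_sub_le (hA : IsExtSeq r a R A) (hR : Set.InjOn R (Set.Iio r))
    (hak : a - r ≤ k) (hk : k < a) (hj : j < a) : A k < A j ↔ R (k % r) < R (j % r) := by
  rw [hA.2 k hk j hj, or_iff_left]
  rintro ⟨hRkj, hkj⟩
  have modEq : k ≡ j [MOD r] := hR (Nat.mod_lt k (by omega)) (Nat.mod_lt j (by omega)) hRkj
  have := modEq.add_le_of_lt hkj
  omega

theorem apply_mod_eq_sub_apply (hra : r ≤ a) (hR : Set.InjOn R (Set.Iio r))
    (hS : ∀ i < r, ∀ j < r, (S i < S j ↔ R j < R i)) (hA : IsExtSeq r a R A)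
    (hA' : IsExtSeq r a S A') (hak : a - r ≤ k) (hk : k < a) :
    A' (k % r) = a - 1 - A k := by
  have hr : 0 < r := by omega
  have hkr : k % r < r := Nat.mod_lt k hr
  have hS_inj : Set.InjOn S (Set.Iio r) := fun i hi j hj hij =>
    hR hi hj <| le_antisymm (not_lt.mp fun h => ((hS i hi j hj).mpr h).ne hij)
      (not_lt.mp fun h => ((hS j hj i hi).mpr h).ne' hij)
  have order_reversed : ∀ j ∈ Finset.range a, A' j < A' (k % r) ↔ A k < A j := by
    intro j hj
    have hja : j < a := Finset.mem_range.mp hj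
    rw [hA'.lt_apply_iff_of_lt hS_inj hra hkr hja, hS _ (Nat.mod_lt j hr) _ hkr,
      hA.apply_lt_iff_of_sub_le hR hak hk hja]
  rw [← hA'.1.card_filter_lt_apply (hkr.trans_le hra), ← hA.1.card_filter_apply_lt,
    Finset.filter_congr order_reversed]

end IsExtSeq

theorem first_entries_eq_compl_last_entries_general {r a : ℕ} (hra : r ≤ a) {R S A A' : ℕ → ℕ}
    (hR : Set.InjOn R (Set.Iio r)) (hS : ∀ i < r, ∀ j < r, (S i < S j ↔ R j < R i))
    (hA : IsExtSeq r a R A) (hA' : IsExtSeq r a S A') :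
    (Finset.range r).image A' = (Finset.Ico (a - r) a).image fun i => a - 1 - A i := by
  have residues : (Finset.Ico (a - r) a).image (· % r) = Finset.range r := by
    simpa only [Nat.sub_add_cancel hra] using Nat.image_Ico_mod (a - r) r
  rw [← residues, Finset.image_image]
  refine Finset.image_congr fun k hk => ?_
  obtain ⟨hak, hk⟩ := Finset.mem_Ico.mp hk
  exact IsExtSeq.apply_mod_eq_sub_apply hra hR hS hA hA' hak hk

theorem first_entries_eq_compl_last_entries (a b : ℕ) (ha : 0 < a) (hab : a < b)
    (hr : 0 < b % a)
    (R : ℕ → ℕ) (hR : IsPermOf (b % a) R)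
    (A A' : ℕ → ℕ) (hA : IsExtSeq (b % a) a R A)
    (hA' : IsExtSeq (b % a) a (permCompl (b % a) R) A') :
    (Finset.range (b % a)).image A' = (Finset.Ico (a - b % a) a).image (fun i => a - 1 - A i) :=
  first_entries_eq_compl_last_entries_general (Nat.mod_lt b ha).le hR.injOn
    (fun _ hi _ hj => permCompl_lt_permCompl_iff (hR.mapsTo hi) (hR.mapsTo hj)) hA hA'
end
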